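/- Let φ : ℝ → ℝ be smooth with 0 ≤ φ ≤ 1, φ supported in {x : x ≥ α + β/4}, φ(x) = 1 for x ≥ α + β/2, and φ' ≥ 0. Then for every ε > 0 there exist constants C > 0 (depending on ε, φ, α, β) such that for every real Dirichlet quasimode datum (u, λ, f) on the stadium S, | ∫_{∂S ∩ W} φ(x) (∂_x u)(∂_N u) dl | ≤ C λ² ‖u‖²_{L²(W)} + C ‖f‖²_{L²(S)} + ε ∫_S (∂_x u)² dA, where ‖u‖_{L²(W)} is the L² norm of u over the wings W. -/

import Mathlib

open MeasureTheory Real Set Filter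

noncomputable section

/-- Partial derivative in the first (x) variable. -/
def pdx (u : ℝ × ℝ → ℝ) (p : ℝ × ℝ) : ℝ := deriv (fun t => u (t, p.2)) p.1

/-- Partial derivative in the second (y) variable. -/
def pdy (u : ℝ × ℝ → ℝ) (p : ℝ × ℝ) : ℝ := deriv (fun t => u (p.1, t)) p.2

/-- The positive Laplacian `Δu = -u_xx - u_yy`. -/
def lap (u : ℝ × ℝ → ℝ) (p : ℝ × ℝ) : ℝ := -(pdx (pdx u) p) - (pdy (pdy u) p)

/-- The central rectangle `R = [-α,α] × [-β,β]`. -/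
def Rect (α β : ℝ) : Set (ℝ × ℝ) := Icc (-α) α ×ˢ Icc (-β) β

/-- The wings `W = W₊ ∪ W₋`, two half-discs of radius β centered at `(±α, 0)`. -/
def Wings (α β : ℝ) : Set (ℝ × ℝ) :=
  {p | (p.1 - α) ^ 2 + p.2 ^ 2 ≤ β ^ 2 ∧ α ≤ p.1} ∪
  {p | (p.1 + α) ^ 2 + p.2 ^ 2 ≤ β ^ 2 ∧ p.1 ≤ -α}

/-- The Bunimovich stadium `S = R ∪ W`. -/
def Stadium (α β : ℝ) : Set (ℝ × ℝ) := Rect α β ∪ Wings α β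

/-- The boundary `∂S`: two horizontal segments and two semicircles. -/
def StadiumBoundary (α β : ℝ) : Set (ℝ × ℝ) :=
  {p | |p.1| ≤ α ∧ (p.2 = β ∨ p.2 = -β)} ∪
  {p | (|p.1| - α) ^ 2 + p.2 ^ 2 = β ^ 2 ∧ α ≤ |p.1|}

/-- Boundary integral `∫_{∂S} g dl` of an integrand `g` depending on the boundary point
and the outward unit normal at that point. -/
def bdryInt (α β : ℝ) (g : ℝ × ℝ → ℝ × ℝ → ℝ) : ℝ :=
  (∫ x in (-α)..α, (g (x, β) (0, 1) + g (x, -β) (0, -1))) +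
  β * ∫ θ in (-(π / 2))..(π / 2),
    (g (α + β * cos θ, β * sin θ) (cos θ, sin θ) +
     g (-(α + β * cos θ), β * sin θ) (-cos θ, sin θ))

/-- Boundary integral `∫_{∂S ∩ W} g dl` over the two semicircles only. -/
def bdryIntW (α β : ℝ) (g : ℝ × ℝ → ℝ × ℝ → ℝ) : ℝ :=
  β * ∫ θ in (-(π / 2))..(π / 2),
    (g (α + β * cos θ, β * sin θ) (cos θ, sin θ) +
     g (-(α + β * cos θ), β * sin θ) (-cos θ, sin θ))

/-- The normal derivative `∂_N u = n₁ ∂_x u + n₂ ∂_y u` at a boundary point `p`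
with outward unit normal `n`. -/
def nderiv (u : ℝ × ℝ → ℝ) (p n : ℝ × ℝ) : ℝ := n.1 * pdx u p + n.2 * pdy u p

/-- A real Dirichlet quasimode datum `(u, λ, f)` on the stadium: `λ > 0`, `u` smooth on a
neighborhood of `S`, `u = 0` on `∂S`, and `(Δ - λ²) u = f` on `S`. -/
structure QMDatum (α β : ℝ) where
  u : ℝ × ℝ → ℝ
  lam : ℝ
  f : ℝ × ℝ → ℝ
  lam_pos : 0 < lam
  smooth : ∃ V : Set (ℝ × ℝ), IsOpen V ∧ Stadium α β ⊆ V ∧ ContDiffOn ℝ (⊤ : ℕ∞) u V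
  dirichlet : ∀ p ∈ StadiumBoundary α β, u p = 0
  eqn : ∀ p ∈ Stadium α β, lap u p - lam ^ 2 * u p = f p

/-! Integrating the divergence of the Rellich field `2 φ u_x ∇u - φ (|∇u|² - λ² u²) e₁`, the one
attached to the multiplier `φ(x) ∂_x`, gives

  `∫_{∂S ∩ W} φ u_x ∂_N u = ∫_S φ' (u_x² - u_y² + λ² u²) - 2 φ u_x f`,

because `∇u` is normal to `∂S` and `u_x` vanishes on the flat sides. The last term costs
`ε ‖u_x‖² + C ‖f‖²`. For the other one, choose a smooth `ψ ≥ |φ'|` that vanishes for `x ≤ α`;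
Green's identity with weight `ψ` bounds `∫_S ψ (|∇u|² + λ² u²)` by a multiple of
`(1 + λ²) ‖u‖²_{L²(W)} + ‖f‖²`. Finally `‖u‖²_{L²(W)}` is dominated by `λ² ‖u‖²_{L²(W)}` when `λ` is
bounded below, and by `‖f‖²` when `λ²` is a small fraction of the Poincaré constant. -/

section PartialDerivatives

variable {G : ℝ × ℝ → ℝ} {p : ℝ × ℝ} {m n : WithTop ℕ∞}

lemma pdx_eq_fderiv (hG : DifferentiableAt ℝ G p) : pdx G p = fderiv ℝ G p (1, 0) :=
  (hG.hasFDerivAt.comp_hasDerivAt (f := fun t : ℝ => (t, p.2)) p.1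
    ((hasDerivAt_id p.1).prodMk (hasDerivAt_const p.1 p.2))).deriv

lemma pdy_eq_fderiv (hG : DifferentiableAt ℝ G p) : pdy G p = fderiv ℝ G p (0, 1) :=
  (hG.hasFDerivAt.comp_hasDerivAt (f := fun t : ℝ => (p.1, t)) p.2
    ((hasDerivAt_const p.2 p.1).prodMk (hasDerivAt_id p.2))).deriv

lemma hasDerivAt_comp_curve {γ₁ γ₂ : ℝ → ℝ} {a b t : ℝ}
    (hG : DifferentiableAt ℝ G (γ₁ t, γ₂ t)) (h₁ : HasDerivAt γ₁ a t) (h₂ : HasDerivAt γ₂ b t) :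
    HasDerivAt (fun s => G (γ₁ s, γ₂ s))
      (a * pdx G (γ₁ t, γ₂ t) + b * pdy G (γ₁ t, γ₂ t)) t := by
  have hab : (a, b) = a • ((1, 0) : ℝ × ℝ) + b • ((0, 1) : ℝ × ℝ) := by ext <;> simp
  have h := hG.hasFDerivAt.comp_hasDerivAt (f := fun s => (γ₁ s, γ₂ s)) t (h₁.prodMk h₂)
  rwa [hab, map_add, map_smul, map_smul, smul_eq_mul, smul_eq_mul, ← pdx_eq_fderiv hG,
    ← pdy_eq_fderiv hG] at h

lemma hasDerivAt_pdx (hG : DifferentiableAt ℝ G p) :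
    HasDerivAt (fun t => G (t, p.2)) (pdx G p) p.1 := by
  simpa using hasDerivAt_comp_curve hG (hasDerivAt_id' p.1) (hasDerivAt_const p.1 p.2)

lemma hasDerivAt_pdy (hG : DifferentiableAt ℝ G p) :
    HasDerivAt (fun t => G (p.1, t)) (pdy G p) p.2 := by
  simpa using hasDerivAt_comp_curve hG (hasDerivAt_const p.2 p.1) (hasDerivAt_id' p.2)

lemma eventually_differentiableAt (hG : ContDiffAt ℝ n G p) (hn : 1 ≤ n) :
    ∀ᶠ q in nhds p, DifferentiableAt ℝ G q :=
  ((hG.of_le hn).eventually (by simp)).mono fun _ hq => hq.differentiableAt one_ne_zero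

lemma pdx_eventuallyEq_fderiv (hG : ContDiffAt ℝ n G p) (hn : 1 ≤ n) :
    pdx G =ᶠ[nhds p] fun q => fderiv ℝ G q (1, 0) :=
  (eventually_differentiableAt hG hn).mono fun _ => pdx_eq_fderiv

lemma pdy_eventuallyEq_fderiv (hG : ContDiffAt ℝ n G p) (hn : 1 ≤ n) :
    pdy G =ᶠ[nhds p] fun q => fderiv ℝ G q (0, 1) :=
  (eventually_differentiableAt hG hn).mono fun _ => pdy_eq_fderiv

lemma contDiffAt_pdx (hG : ContDiffAt ℝ n G p) (hmn : m + 1 ≤ n) : ContDiffAt ℝ m (pdx G) p :=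
  ((hG.fderiv_right hmn).clm_apply contDiffAt_const).congr_of_eventuallyEq
    (pdx_eventuallyEq_fderiv hG (le_add_self.trans hmn))

lemma contDiffAt_pdy (hG : ContDiffAt ℝ n G p) (hmn : m + 1 ≤ n) : ContDiffAt ℝ m (pdy G) p :=
  ((hG.fderiv_right hmn).clm_apply contDiffAt_const).congr_of_eventuallyEq
    (pdy_eventuallyEq_fderiv hG (le_add_self.trans hmn))

lemma continuousOn_pdx {S : Set (ℝ × ℝ)} (hG : ∀ p ∈ S, ContDiffAt ℝ n G p) (hn : 1 ≤ n) :
    ContinuousOn (pdx G) S := fun p hp =>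
  (contDiffAt_pdx (hG p hp) (m := 0) (by simpa)).continuousAt.continuousWithinAt

lemma continuousOn_pdy {S : Set (ℝ × ℝ)} (hG : ∀ p ∈ S, ContDiffAt ℝ n G p) (hn : 1 ≤ n) :
    ContinuousOn (pdy G) S := fun p hp =>
  (contDiffAt_pdy (hG p hp) (m := 0) (by simpa)).continuousAt.continuousWithinAt

lemma continuousOn_lap {S : Set (ℝ × ℝ)} (hG : ∀ p ∈ S, ContDiffAt ℝ 2 G p) :
    ContinuousOn (lap G) S :=
  (continuousOn_pdx (fun p hp => contDiffAt_pdx (hG p hp) (m := 1) le_rfl) le_rfl).neg.sub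
    (continuousOn_pdy (fun p hp => contDiffAt_pdy (hG p hp) (m := 1) le_rfl) le_rfl)

lemma pdx_pdy_comm (hG : ContDiffAt ℝ 2 G p) : pdx (pdy G) p = pdy (pdx G) p := by
  have hfderiv : DifferentiableAt ℝ (fderiv ℝ G) p :=
    (hG.fderiv_right (m := 1) le_rfl).differentiableAt one_ne_zero
  have hsymm : IsSymmSndFDerivAt ℝ G p := hG.isSymmSndFDerivAt (by simp)
  rw [pdx_eq_fderiv ((contDiffAt_pdy hG (m := 1) le_rfl).differentiableAt one_ne_zero),
    pdy_eq_fderiv ((contDiffAt_pdx hG (m := 1) le_rfl).differentiableAt one_ne_zero),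
    (pdy_eventuallyEq_fderiv hG one_le_two).fderiv_eq,
    (pdx_eventuallyEq_fderiv hG one_le_two).fderiv_eq,
    fderiv_clm_apply hfderiv (by fun_prop), fderiv_clm_apply hfderiv (by fun_prop)]
  simpa using hsymm (1, 0) (0, 1)

end PartialDerivatives

section Fubini

variable {S : Set (ℝ × ℝ)} {a b : ℝ} {l r : ℝ → ℝ}

lemma setIntegral_eq_intervalIntegral_of_mem_iff (hSm : MeasurableSet S) (hab : a ≤ b)
    (hlr : ∀ x ∈ Icc a b, l x ≤ r x)
    (hS : ∀ x y, (x, y) ∈ S ↔ x ∈ Icc a b ∧ y ∈ Icc (l x) (r x))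
    {g : ℝ × ℝ → ℝ} (hg : IntegrableOn g S) :
    ∫ p in S, g p = ∫ x in a..b, ∫ y in l x..r x, g (x, y) := by
  rw [← integrable_indicator_iff hSm, Measure.volume_eq_prod] at hg
  rw [← integral_indicator hSm, Measure.volume_eq_prod, integral_prod _ hg,
    intervalIntegral.integral_of_le hab, ← integral_Icc_eq_integral_Ioc,
    ← integral_indicator measurableSet_Icc]
  congr 1 with x
  by_cases hx : x ∈ Icc a b
  · rw [indicator_of_mem hx, intervalIntegral.integral_of_le (hlr x hx),
      ← integral_Icc_eq_integral_Ioc, ← integral_indicator measurableSet_Icc]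
    simp only [indicator, hS, hx, true_and]
  · simp only [indicator, hS, hx, false_and, if_false, integral_zero]

lemma setIntegral_pdy_of_mem_iff (hSc : IsCompact S) (hab : a ≤ b)
    (hlr : ∀ x ∈ Icc a b, l x ≤ r x)
    (hS : ∀ x y, (x, y) ∈ S ↔ x ∈ Icc a b ∧ y ∈ Icc (l x) (r x))
    {G : ℝ × ℝ → ℝ} (hG : ∀ p ∈ S, ContDiffAt ℝ 1 G p) :
    ∫ p in S, pdy G p = ∫ x in a..b, (G (x, r x) - G (x, l x)) := by
  have hpdy : ContinuousOn (pdy G) S := continuousOn_pdy hG le_rfl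
  rw [setIntegral_eq_intervalIntegral_of_mem_iff hSc.measurableSet hab hlr hS
    (hpdy.integrableOn_compact hSc)]
  refine intervalIntegral.integral_congr fun x hx => ?_
  rw [uIcc_of_le hab] at hx
  have hmem : ∀ y ∈ uIcc (l x) (r x), (x, y) ∈ S := fun y hy =>
    (hS x y).2 ⟨hx, by rwa [uIcc_of_le (hlr x hx)] at hy⟩
  exact intervalIntegral.integral_eq_sub_of_hasDerivAt (f := fun y => G (x, y))
    (fun y hy => hasDerivAt_pdy ((hG _ (hmem y hy)).differentiableAt one_ne_zero))
    (hpdy.comp (by fun_prop) hmem).intervalIntegrable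

lemma setIntegral_pdx_of_mem_iff (hSc : IsCompact S) (hab : a ≤ b)
    (hlr : ∀ y ∈ Icc a b, l y ≤ r y)
    (hS : ∀ x y, (x, y) ∈ S ↔ y ∈ Icc a b ∧ x ∈ Icc (l y) (r y))
    {G : ℝ × ℝ → ℝ} (hG : ∀ p ∈ S, ContDiffAt ℝ 1 G p) :
    ∫ p in S, pdx G p = ∫ y in a..b, (G (r y, y) - G (l y, y)) := by
  have hswap : MeasurePreserving (Prod.swap : ℝ × ℝ → ℝ × ℝ) :=
    Measure.measurePreserving_swap
  rw [← hswap.setIntegral_preimage_emb MeasurableEquiv.prodComm.measurableEmbedding]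
  refine setIntegral_pdy_of_mem_iff (G := G ∘ Prod.swap)
    ((Homeomorph.prodComm ℝ ℝ).isCompact_preimage.2 hSc) hab hlr (fun y x => hS x y)
    fun p hp => (hG _ hp).comp p ((contDiff_snd.prodMk contDiff_fst).contDiffAt)

end Fubini

section CircularArcs

variable {r : ℝ}

lemma sqrt_sq_sub_mul_sin_sq (hr : 0 ≤ r) {θ : ℝ} (hθ : 0 ≤ cos θ) :
    √(r ^ 2 - (r * sin θ) ^ 2) = r * cos θ := by
  rw [show r ^ 2 - (r * sin θ) ^ 2 = (r * cos θ) ^ 2 by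
    linear_combination (-r ^ 2) * sin_sq_add_cos_sq θ]
  exact sqrt_sq (mul_nonneg hr hθ)

lemma sqrt_sq_sub_mul_cos_sq (hr : 0 ≤ r) {θ : ℝ} (hθ : 0 ≤ sin θ) :
    √(r ^ 2 - (r * cos θ) ^ 2) = r * sin θ := by
  rw [show r ^ 2 - (r * cos θ) ^ 2 = (r * sin θ) ^ 2 by
    linear_combination (-r ^ 2) * sin_sq_add_cos_sq θ]
  exact sqrt_sq (mul_nonneg hr hθ)

lemma integral_right_arc_dy (hr : 0 ≤ r) (g : ℝ → ℝ → ℝ) :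
    ∫ y in (-r)..r, g √(r ^ 2 - y ^ 2) y =
      ∫ θ in (-(π / 2))..(π / 2), g (r * cos θ) (r * sin θ) * (r * cos θ) := by
  have hpi : -(π / 2) ≤ π / 2 := by linarith [pi_pos]
  have hsubst := intervalIntegral.integral_comp_mul_deriv_of_deriv_nonneg
    (a := -(π / 2)) (b := π / 2) (f := fun θ => r * sin θ) (f' := fun θ => r * cos θ)
    (g := fun y => g √(r ^ 2 - y ^ 2) y) (by fun_prop)
    (fun θ _ => (hasDerivAt_sin θ).const_mul r) (fun θ hθ => by
      rw [min_eq_left hpi, max_eq_right hpi] at hθ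
      exact mul_nonneg hr (cos_pos_of_mem_Ioo hθ).le)
  simp only [sin_neg, sin_pi_div_two, mul_neg, mul_one] at hsubst
  rw [← hsubst]
  refine intervalIntegral.integral_congr fun θ hθ => ?_
  rw [uIcc_of_le hpi] at hθ
  simp only [Function.comp, sqrt_sq_sub_mul_sin_sq hr (cos_nonneg_of_mem_Icc hθ)]

lemma integral_upper_arc_dx (hr : 0 ≤ r) (g : ℝ → ℝ → ℝ) :
    ∫ x in 0..r, g x √(r ^ 2 - x ^ 2) =
      ∫ θ in 0..(π / 2), g (r * cos θ) (r * sin θ) * (r * sin θ) := by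
  have hpi : (0 : ℝ) ≤ π / 2 := by positivity
  have hsin : ∀ θ ∈ Icc 0 (π / 2), 0 ≤ sin θ := fun θ hθ =>
    sin_nonneg_of_nonneg_of_le_pi hθ.1 (by linarith [hθ.2])
  have hsubst := intervalIntegral.integral_comp_mul_deriv_of_deriv_nonpos
    (a := 0) (b := π / 2) (f := fun θ => r * cos θ) (f' := fun θ => r * -sin θ)
    (g := fun x => g x √(r ^ 2 - x ^ 2)) (by fun_prop)
    (fun θ _ => (hasDerivAt_cos θ).const_mul r) (fun θ hθ => by
      rw [min_eq_left hpi, max_eq_right hpi] at hθ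
      exact mul_nonpos_of_nonneg_of_nonpos hr
        (neg_nonpos.2 (hsin θ (Ioo_subset_Icc_self hθ))))
  simp only [cos_zero, cos_pi_div_two, mul_zero, mul_one] at hsubst
  rw [intervalIntegral.integral_symm, ← hsubst, ← intervalIntegral.integral_neg]
  refine intervalIntegral.integral_congr fun θ hθ => ?_
  rw [uIcc_of_le hpi] at hθ
  simp only [Function.comp, sqrt_sq_sub_mul_cos_sq hr (hsin θ hθ), mul_neg, neg_neg]

lemma integral_lower_arc_dx (hr : 0 ≤ r) (g : ℝ → ℝ → ℝ) :
    ∫ x in 0..r, g x (-√(r ^ 2 - x ^ 2)) =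
      -∫ θ in (-(π / 2))..0, g (r * cos θ) (r * sin θ) * (r * sin θ) := by
  have hreflect := intervalIntegral.integral_comp_neg (a := 0) (b := π / 2)
    fun θ => g (r * cos θ) (r * sin θ) * (r * sin θ)
  rw [integral_upper_arc_dx hr fun x y => g x (-y), ← neg_zero, ← hreflect,
    ← intervalIntegral.integral_neg, neg_zero]
  simp only [cos_neg, sin_neg, mul_neg, neg_neg]

lemma integral_right_arc_dx (hr : 0 ≤ r) {g : ℝ → ℝ → ℝ}
    (hg : ContinuousOn (fun θ => g (r * cos θ) (r * sin θ)) (Icc (-(π / 2)) (π / 2)))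
    (hupper : IntervalIntegrable (fun x => g x √(r ^ 2 - x ^ 2)) volume 0 r)
    (hlower : IntervalIntegrable (fun x => g x (-√(r ^ 2 - x ^ 2))) volume 0 r) :
    ∫ x in 0..r, (g x √(r ^ 2 - x ^ 2) - g x (-√(r ^ 2 - x ^ 2))) =
      ∫ θ in (-(π / 2))..(π / 2), g (r * cos θ) (r * sin θ) * (r * sin θ) := by
  have hint : ∀ s t, -(π / 2) ≤ s → s ≤ t → t ≤ π / 2 → IntervalIntegrable
      (fun θ => g (r * cos θ) (r * sin θ) * (r * sin θ)) volume s t := fun s t hs hst ht =>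
    ((hg.mul (by fun_prop)).mono (Icc_subset_Icc hs ht)).intervalIntegrable_of_Icc hst
  have hpi : (0 : ℝ) ≤ π / 2 := by positivity
  rw [intervalIntegral.integral_sub hupper hlower, integral_upper_arc_dx hr g,
    integral_lower_arc_dx hr g, sub_neg_eq_add, add_comm,
    intervalIntegral.integral_add_adjacent_intervals
      (hint _ _ le_rfl (neg_nonpos.2 hpi) hpi) (hint _ _ (neg_nonpos.2 hpi) hpi le_rfl)]

end CircularArcs

/-- The outward unit normals of the stadium: `IsOutwardNormal α β p n` says that `n` is the outward
unit normal at the boundary point `p`, in the parametrization used by `bdryInt`. -/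
inductive IsOutwardNormal (α β : ℝ) : ℝ × ℝ → ℝ × ℝ → Prop
  | top {x : ℝ} (hx : x ∈ Icc (-α) α) : IsOutwardNormal α β (x, β) (0, 1)
  | bottom {x : ℝ} (hx : x ∈ Icc (-α) α) : IsOutwardNormal α β (x, -β) (0, -1)
  | right {θ : ℝ} (hθ : θ ∈ Icc (-(π / 2)) (π / 2)) :
      IsOutwardNormal α β (α + β * cos θ, β * sin θ) (cos θ, sin θ)
  | left {θ : ℝ} (hθ : θ ∈ Icc (-(π / 2)) (π / 2)) :
      IsOutwardNormal α β (-(α + β * cos θ), β * sin θ) (-cos θ, sin θ)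

/-- Half the length of the horizontal chord of the stadium at height `y`. -/
def halfWidth (α β y : ℝ) : ℝ := α + √(β ^ 2 - y ^ 2)

/-- Half the length of the vertical chord of the stadium at abscissa `x`. -/
def halfHeight (α β x : ℝ) : ℝ := √(β ^ 2 - (max (|x| - α) 0) ^ 2)

section StadiumGeometry

variable {α β : ℝ}

-- `max (|x| - α) 0` is the horizontal distance from `(x, y)` to the segment `[-α, α] × {0}`: the
-- stadium is the closed `β`-neighbourhood of that segment.
lemma mem_stadium_iff (hα : 0 < α) (hβ : 0 < β) {p : ℝ × ℝ} :
    p ∈ Stadium α β ↔ (max (|p.1| - α) 0) ^ 2 + p.2 ^ 2 ≤ β ^ 2 := by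
  obtain ⟨x, y⟩ := p
  simp only [Stadium, Rect, Wings, mem_union, mem_prod, mem_Icc, mem_ofPred_eq, ← abs_le]
  have hy_of : ∀ z : ℝ, z ^ 2 + y ^ 2 ≤ β ^ 2 → |y| ≤ β := fun z hz =>
    abs_le_of_sq_le_sq (by linarith [sq_nonneg z]) hβ.le
  rcases le_or_gt |x| α with hx | hx
  · rw [max_eq_right (sub_nonpos.2 hx)]
    refine ⟨fun h => ?_, fun h => Or.inl ⟨hx, hy_of 0 h⟩⟩
    have hy : |y| ≤ β := by
      rcases h with h | h | h
      exacts [h.2, hy_of _ h.1, hy_of _ h.1]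
    linarith [sq_le_sq' (abs_le.1 hy).1 (abs_le.1 hy).2]
  · rw [max_eq_left (sub_nonneg.2 hx.le)]
    rcases le_total 0 x with h0 | h0
    · rw [abs_of_nonneg h0] at hx ⊢
      constructor
      · rintro (h | h | h) <;> [linarith [h.1]; exact h.1; linarith [h.2]]
      · exact fun h => Or.inr (Or.inl ⟨h, hx.le⟩)
    · rw [abs_of_nonpos h0] at hx ⊢
      rw [show -x - α = -(x + α) by ring, neg_sq]
      constructor
      · rintro (h | h | h) <;> [linarith [h.1]; linarith [h.2]; exact h.1]
      · exact fun h => Or.inr (Or.inr ⟨h, by linarith⟩)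

lemma max_abs_sub_le_iff {s : ℝ} (hs : 0 ≤ s) {x : ℝ} :
    max (|x| - α) 0 ≤ s ↔ x ∈ Icc (-(α + s)) (α + s) := by
  rw [mem_Icc, ← abs_le, max_le_iff, sub_le_iff_le_add', and_iff_left hs]

lemma mem_stadium_iff_halfWidth (hα : 0 < α) (hβ : 0 < β) (x y : ℝ) :
    (x, y) ∈ Stadium α β ↔
      y ∈ Icc (-β) β ∧ x ∈ Icc (-halfWidth α β y) (halfWidth α β y) := by
  rw [mem_stadium_iff hα hβ, halfWidth, ← max_abs_sub_le_iff (sqrt_nonneg _), mem_Icc, ← abs_le]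
  have hm : 0 ≤ max (|x| - α) 0 := le_max_right _ _
  constructor
  · intro h
    exact ⟨abs_le_of_sq_le_sq (by linarith [sq_nonneg (max (|x| - α) 0)]) hβ.le,
      le_sqrt_of_sq_le (by linarith)⟩
  · rintro ⟨hy, h⟩
    have hy2 : y ^ 2 ≤ β ^ 2 := sq_le_sq' (abs_le.1 hy).1 (abs_le.1 hy).2
    linarith [(le_sqrt hm (sub_nonneg.2 hy2)).1 h]

lemma mem_stadium_iff_halfHeight (hα : 0 < α) (hβ : 0 < β) (x y : ℝ) :
    (x, y) ∈ Stadium α β ↔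
      x ∈ Icc (-(α + β)) (α + β) ∧ y ∈ Icc (-halfHeight α β x) (halfHeight α β x) := by
  rw [mem_stadium_iff hα hβ, halfHeight, ← max_abs_sub_le_iff hβ.le, mem_Icc]
  have hm : 0 ≤ max (|x| - α) 0 := le_max_right _ _
  constructor
  · intro h
    exact ⟨le_of_sq_le_sq (by linarith [sq_nonneg y]) hβ.le,
      abs_le.1 (abs_le_sqrt (by linarith))⟩
  · rintro ⟨hx, h⟩
    have hx2 : (max (|x| - α) 0) ^ 2 ≤ β ^ 2 := pow_le_pow_left₀ hm hx 2
    linarith [(Real.sq_le (sub_nonneg.2 hx2)).2 h]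

lemma halfWidth_nonneg (hα : 0 < α) (y : ℝ) : 0 ≤ halfWidth α β y :=
  add_nonneg hα.le (sqrt_nonneg _)

lemma halfHeight_nonneg (x : ℝ) : 0 ≤ halfHeight α β x := sqrt_nonneg _

lemma continuous_halfHeight : Continuous (halfHeight α β) := by
  unfold halfHeight
  fun_prop

lemma halfHeight_neg (x : ℝ) : halfHeight α β (-x) = halfHeight α β x := by
  simp only [halfHeight, abs_neg]

lemma halfHeight_of_abs_le (hβ : 0 < β) {x : ℝ} (hx : |x| ≤ α) : halfHeight α β x = β := by
  rw [halfHeight, max_eq_right (sub_nonpos.2 hx), zero_pow two_ne_zero, sub_zero, sqrt_sq hβ.le]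

lemma halfHeight_add (hα : 0 < α) {t : ℝ} (ht : 0 ≤ t) :
    halfHeight α β (α + t) = √(β ^ 2 - t ^ 2) := by
  rw [halfHeight, abs_of_nonneg (by linarith), add_sub_cancel_left, max_eq_left ht]

lemma isCompact_stadium (hα : 0 < α) (hβ : 0 < β) : IsCompact (Stadium α β) := by
  have hclosed : IsClosed (Stadium α β) := by
    have hsublevel : Stadium α β = {p | (max (|p.1| - α) 0) ^ 2 + p.2 ^ 2 ≤ β ^ 2} := by
      ext p
      exact mem_stadium_iff hα hβ
    rw [hsublevel]
    exact isClosed_le (by fun_prop) (by fun_prop)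
  exact (isCompact_Icc.prod isCompact_Icc).of_isClosed_subset hclosed fun p hp =>
    ⟨((mem_stadium_iff_halfHeight hα hβ p.1 p.2).1 hp).1,
      ((mem_stadium_iff_halfWidth hα hβ p.1 p.2).1 hp).1⟩

lemma measurableSet_wings : MeasurableSet (Wings α β) := by
  have hdisc : ∀ c : ℝ, MeasurableSet {p : ℝ × ℝ | (p.1 + c) ^ 2 + p.2 ^ 2 ≤ β ^ 2} := fun c =>
    measurableSet_le (by fun_prop) (by fun_prop)
  exact ((hdisc (-α)).inter (measurableSet_le measurable_const measurable_fst)).union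
    ((hdisc α).inter (measurableSet_le measurable_fst measurable_const))

lemma fst_le_of_mem_stadium_diff_wings {p : ℝ × ℝ} (hp : p ∈ Stadium α β \ Wings α β) :
    p.1 ≤ α :=
  (hp.1.resolve_right hp.2).1.2

lemma integrableOn_stadium (hα : 0 < α) (hβ : 0 < β) {g : ℝ × ℝ → ℝ}
    (hg : ContinuousOn g (Stadium α β)) : IntegrableOn g (Stadium α β) :=
  hg.integrableOn_compact (isCompact_stadium hα hβ)

lemma setIntegral_sq_wings_le_stadium (hα : 0 < α) (hβ : 0 < β) {g : ℝ × ℝ → ℝ}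
    (hg : ContinuousOn g (Stadium α β)) :
    ∫ p in Wings α β, g p ^ 2 ≤ ∫ p in Stadium α β, g p ^ 2 :=
  setIntegral_mono_set (integrableOn_stadium hα hβ (hg.pow 2))
    (.of_forall fun _ => sq_nonneg _) (.of_forall subset_union_right)

lemma stadiumBoundary_subset (hα : 0 < α) (hβ : 0 < β) : StadiumBoundary α β ⊆ Stadium α β := by
  rintro p (⟨hx, hy⟩ | ⟨hp, hx⟩) <;> rw [mem_stadium_iff hα hβ]
  · rw [max_eq_right (sub_nonpos.2 hx)]
    rcases hy with hy | hy <;> simp [hy]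
  · rw [max_eq_left (sub_nonneg.2 hx)]
    exact hp.le

namespace IsOutwardNormal

variable {p n : ℝ × ℝ}

lemma mem_stadiumBoundary (hα : 0 < α) (hβ : 0 < β) (h : IsOutwardNormal α β p n) :
    p ∈ StadiumBoundary α β := by
  have harc : ∀ θ, θ ∈ Icc (-(π / 2)) (π / 2) → |α + β * cos θ| = α + β * cos θ ∧
      (α + β * cos θ - α) ^ 2 + (β * sin θ) ^ 2 = β ^ 2 ∧ α ≤ α + β * cos θ := fun θ hθ => by
    have hcos : 0 ≤ β * cos θ := mul_nonneg hβ.le (cos_nonneg_of_mem_Icc hθ)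
    exact ⟨abs_of_nonneg (by linarith), by linear_combination β ^ 2 * sin_sq_add_cos_sq θ,
      by linarith⟩
  cases h with
  | top hx => exact Or.inl ⟨abs_le.2 hx, Or.inl rfl⟩
  | bottom hx => exact Or.inl ⟨abs_le.2 hx, Or.inr rfl⟩
  | right hθ => exact Or.inr (by simpa only [mem_ofPred_eq, (harc _ hθ).1] using (harc _ hθ).2)
  | left hθ =>
    exact Or.inr (by simpa only [mem_ofPred_eq, abs_neg, (harc _ hθ).1] using (harc _ hθ).2)

lemma mem_stadium (hα : 0 < α) (hβ : 0 < β) (h : IsOutwardNormal α β p n) : p ∈ Stadium α β :=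
  stadiumBoundary_subset hα hβ (h.mem_stadiumBoundary hα hβ)

end IsOutwardNormal

lemma continuousOn_right_arc (hα : 0 < α) (hβ : 0 < β) {G : ℝ × ℝ → ℝ}
    (hG : ContinuousOn G (Stadium α β)) :
    ContinuousOn (fun θ => G (α + β * cos θ, β * sin θ)) (Icc (-(π / 2)) (π / 2)) :=
  hG.comp (Continuous.continuousOn (by fun_prop)) fun _ hθ =>
    (IsOutwardNormal.right hθ).mem_stadium hα hβ

lemma continuousOn_left_arc (hα : 0 < α) (hβ : 0 < β) {G : ℝ × ℝ → ℝ}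
    (hG : ContinuousOn G (Stadium α β)) :
    ContinuousOn (fun θ => G (-(α + β * cos θ), β * sin θ)) (Icc (-(π / 2)) (π / 2)) :=
  hG.comp (Continuous.continuousOn (by fun_prop)) fun _ hθ =>
    (IsOutwardNormal.left hθ).mem_stadium hα hβ

lemma bdryInt_congr (hα : 0 < α) {g₁ g₂ : ℝ × ℝ → ℝ × ℝ → ℝ}
    (h : ∀ p n, IsOutwardNormal α β p n → g₁ p n = g₂ p n) :
    bdryInt α β g₁ = bdryInt α β g₂ := by
  have hpi : -(π / 2) ≤ π / 2 := by linarith [pi_pos]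
  rw [bdryInt, bdryInt]
  congr 1
  · refine intervalIntegral.integral_congr fun x hx => ?_
    rw [uIcc_of_le (by linarith)] at hx
    exact congrArg₂ _ (h _ _ (.top hx)) (h _ _ (.bottom hx))
  · congr 1
    refine intervalIntegral.integral_congr fun θ hθ => ?_
    rw [uIcc_of_le hpi] at hθ
    exact congrArg₂ _ (h _ _ (.right hθ)) (h _ _ (.left hθ))

lemma bdryInt_eq_zero (hα : 0 < α) {g : ℝ × ℝ → ℝ × ℝ → ℝ}
    (h : ∀ p n, IsOutwardNormal α β p n → g p n = 0) : bdryInt α β g = 0 := by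
  rw [bdryInt_congr hα (g₂ := fun _ _ => 0) h]
  simp [bdryInt]

lemma bdryInt_eq_bdryIntW (hα : 0 < α) {g : ℝ × ℝ → ℝ × ℝ → ℝ}
    (htop : ∀ x ∈ Icc (-α) α, g (x, β) (0, 1) = 0)
    (hbottom : ∀ x ∈ Icc (-α) α, g (x, -β) (0, -1) = 0) :
    bdryInt α β g = bdryIntW α β g := by
  have hflat : ∫ x in (-α)..α, (g (x, β) (0, 1) + g (x, -β) (0, -1)) = 0 := by
    refine intervalIntegral.integral_zero_ae (.of_forall fun x hx => ?_)
    rw [uIoc_of_le (by linarith)] at hx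
    rw [htop x (Ioc_subset_Icc_self hx), hbottom x (Ioc_subset_Icc_self hx), add_zero]
  rw [bdryInt, bdryIntW, hflat, zero_add]

end StadiumGeometry

section Divergence

variable {α β : ℝ} {F G : ℝ × ℝ → ℝ}

lemma setIntegral_pdx_stadium (hα : 0 < α) (hβ : 0 < β)
    (hF : ∀ p ∈ Stadium α β, ContDiffAt ℝ 1 F p) :
    ∫ p in Stadium α β, pdx F p = ∫ θ in (-(π / 2))..(π / 2),
      (F (α + β * cos θ, β * sin θ) - F (-(α + β * cos θ), β * sin θ)) * (β * cos θ) := by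
  rw [setIntegral_pdx_of_mem_iff (isCompact_stadium hα hβ) (by linarith)
    (fun y _ => neg_le_self (halfWidth_nonneg hα y)) (mem_stadium_iff_halfWidth hα hβ) hF]
  exact integral_right_arc_dy hβ.le fun t y => F (α + t, y) - F (-(α + t), y)

lemma continuousOn_halfHeight (hα : 0 < α) (hβ : 0 < β) (hG : ContinuousOn G (Stadium α β)) :
    ContinuousOn (fun x => G (x, halfHeight α β x)) (Icc (-(α + β)) (α + β)) :=
  hG.comp (continuous_id.prodMk continuous_halfHeight).continuousOn fun x hx =>
    (mem_stadium_iff_halfHeight hα hβ _ _).2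
      ⟨hx, neg_le_self (halfHeight_nonneg x), le_rfl⟩

lemma continuousOn_neg_halfHeight (hα : 0 < α) (hβ : 0 < β)
    (hG : ContinuousOn G (Stadium α β)) :
    ContinuousOn (fun x => G (x, -halfHeight α β x)) (Icc (-(α + β)) (α + β)) :=
  hG.comp (continuous_id.prodMk continuous_halfHeight.neg).continuousOn fun x hx =>
    (mem_stadium_iff_halfHeight hα hβ _ _).2
      ⟨hx, le_rfl, neg_le_self (halfHeight_nonneg x)⟩

lemma integral_right_wing (hα : 0 < α) (hβ : 0 < β) (hG : ContinuousOn G (Stadium α β)) :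
    ∫ x in α..(α + β), (G (x, halfHeight α β x) - G (x, -halfHeight α β x)) =
      ∫ θ in (-(π / 2))..(π / 2), G (α + β * cos θ, β * sin θ) * (β * sin θ) := by
  have hchord : ∀ t ∈ Icc 0 β, √(β ^ 2 - t ^ 2) = halfHeight α β (α + t) := fun t ht =>
    (halfHeight_add hα ht.1).symm
  have hmaps : MapsTo (fun t => α + t) (Icc 0 β) (Icc (-(α + β)) (α + β)) := fun t ht =>
    ⟨by linarith [ht.1], by linarith [ht.2]⟩
  have hupper : ContinuousOn (fun t => G (α + t, √(β ^ 2 - t ^ 2))) (Icc 0 β) :=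
    ((continuousOn_halfHeight hα hβ hG).comp (by fun_prop) hmaps).congr fun t ht => by
      simp only [Function.comp, hchord t ht]
  have hlower : ContinuousOn (fun t => G (α + t, -√(β ^ 2 - t ^ 2))) (Icc 0 β) :=
    ((continuousOn_neg_halfHeight hα hβ hG).comp (by fun_prop) hmaps).congr fun t ht => by
      simp only [Function.comp, hchord t ht]
  have hshift := intervalIntegral.integral_comp_add_left (a := 0) (b := β)
    (fun x => G (x, halfHeight α β x) - G (x, -halfHeight α β x)) α
  rw [add_zero] at hshift
  rw [← hshift, ← integral_right_arc_dx hβ.le (g := fun t y => G (α + t, y))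
    (continuousOn_right_arc hα hβ hG) (hupper.intervalIntegrable_of_Icc hβ.le)
    (hlower.intervalIntegrable_of_Icc hβ.le)]
  refine intervalIntegral.integral_congr fun t ht => ?_
  rw [uIcc_of_le hβ.le] at ht
  simp only [hchord t ht]

lemma integral_left_wing (hα : 0 < α) (hβ : 0 < β) (hG : ContinuousOn G (Stadium α β)) :
    ∫ x in (-(α + β))..(-α), (G (x, halfHeight α β x) - G (x, -halfHeight α β x)) =
      ∫ θ in (-(π / 2))..(π / 2), G (-(α + β * cos θ), β * sin θ) * (β * sin θ) := by
  have hreflect : ContinuousOn (fun p : ℝ × ℝ => G (-p.1, p.2)) (Stadium α β) :=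
    hG.comp (by fun_prop) fun p hp =>
      (mem_stadium_iff hα hβ).2 (by simpa only [abs_neg] using (mem_stadium_iff hα hβ).1 hp)
  rw [← integral_right_wing hα hβ hreflect, ← intervalIntegral.integral_comp_neg]
  simp only [halfHeight_neg]

lemma setIntegral_pdy_stadium (hα : 0 < α) (hβ : 0 < β)
    (hG : ∀ p ∈ Stadium α β, ContDiffAt ℝ 1 G p) :
    ∫ p in Stadium α β, pdy G p = (∫ x in (-α)..α, (G (x, β) - G (x, -β))) +
      ∫ θ in (-(π / 2))..(π / 2),
        (G (α + β * cos θ, β * sin θ) + G (-(α + β * cos θ), β * sin θ)) * (β * sin θ) := by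
  have hGc : ContinuousOn G (Stadium α β) := fun p hp => (hG p hp).continuousAt.continuousWithinAt
  have hpi : -(π / 2) ≤ π / 2 := by linarith [pi_pos]
  have hint : ∀ s t, -(α + β) ≤ s → s ≤ t → t ≤ α + β → IntervalIntegrable
      (fun x => G (x, halfHeight α β x) - G (x, -halfHeight α β x)) volume s t :=
    fun s t hs hst ht =>
      (((continuousOn_halfHeight hα hβ hGc).sub (continuousOn_neg_halfHeight hα hβ hGc)).mono
        (Icc_subset_Icc hs ht)).intervalIntegrable_of_Icc hst
  have hflat : ∫ x in (-α)..α, (G (x, halfHeight α β x) - G (x, -halfHeight α β x)) =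
      ∫ x in (-α)..α, (G (x, β) - G (x, -β)) :=
    intervalIntegral.integral_congr fun x hx => by
      rw [uIcc_of_le (by linarith), mem_Icc, ← abs_le] at hx
      simp only [halfHeight_of_abs_le hβ hx]
  have hright : IntervalIntegrable
      (fun θ => G (α + β * cos θ, β * sin θ) * (β * sin θ)) volume (-(π / 2)) (π / 2) :=
    ((continuousOn_right_arc hα hβ hGc).mul (by fun_prop)).intervalIntegrable_of_Icc hpi
  have hleft : IntervalIntegrable
      (fun θ => G (-(α + β * cos θ), β * sin θ) * (β * sin θ)) volume (-(π / 2)) (π / 2) :=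
    ((continuousOn_left_arc hα hβ hGc).mul (by fun_prop)).intervalIntegrable_of_Icc hpi
  simp only [add_mul]
  rw [setIntegral_pdy_of_mem_iff (isCompact_stadium hα hβ) (by linarith)
    (fun x _ => neg_le_self (halfHeight_nonneg x)) (mem_stadium_iff_halfHeight hα hβ) hG,
    ← intervalIntegral.integral_add_adjacent_intervals
      (hint _ (-α) le_rfl (by linarith) (by linarith))
      (hint _ _ (by linarith) (by linarith) le_rfl),
    ← intervalIntegral.integral_add_adjacent_intervals
      (hint _ α (by linarith) (by linarith) (by linarith))
      (hint _ _ (by linarith) (by linarith) le_rfl),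
    integral_left_wing hα hβ hGc, integral_right_wing hα hβ hGc, hflat,
    intervalIntegral.integral_add hright hleft]
  ring

lemma setIntegral_stadium_div (hα : 0 < α) (hβ : 0 < β)
    (hF : ∀ p ∈ Stadium α β, ContDiffAt ℝ 1 F p) (hG : ∀ p ∈ Stadium α β, ContDiffAt ℝ 1 G p) :
    ∫ p in Stadium α β, (pdx F p + pdy G p) =
      bdryInt α β fun p n => n.1 * F p + n.2 * G p := by
  have hFc : ContinuousOn F (Stadium α β) := fun p hp => (hF p hp).continuousAt.continuousWithinAt
  have hGc : ContinuousOn G (Stadium α β) := fun p hp => (hG p hp).continuousAt.continuousWithinAt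
  have hpi : -(π / 2) ≤ π / 2 := by linarith [pi_pos]
  have hFarcs : IntervalIntegrable (fun θ => (F (α + β * cos θ, β * sin θ) -
      F (-(α + β * cos θ), β * sin θ)) * (β * cos θ)) volume (-(π / 2)) (π / 2) :=
    (((continuousOn_right_arc hα hβ hFc).sub (continuousOn_left_arc hα hβ hFc)).mul
      (by fun_prop)).intervalIntegrable_of_Icc hpi
  have hGarcs : IntervalIntegrable (fun θ => (G (α + β * cos θ, β * sin θ) +
      G (-(α + β * cos θ), β * sin θ)) * (β * sin θ)) volume (-(π / 2)) (π / 2) :=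
    (((continuousOn_right_arc hα hβ hGc).add (continuousOn_left_arc hα hβ hGc)).mul
      (by fun_prop)).intervalIntegrable_of_Icc hpi
  rw [integral_add
      (integrableOn_stadium hα hβ (continuousOn_pdx hF le_rfl))
      (integrableOn_stadium hα hβ (continuousOn_pdy hG le_rfl)),
    setIntegral_pdx_stadium hα hβ hF, setIntegral_pdy_stadium hα hβ hG, bdryInt,
    ← intervalIntegral.integral_const_mul, add_left_comm,
    ← intervalIntegral.integral_add hFarcs hGarcs]
  congr 2 <;> funext t <;> ring

end Divergence

section DirichletCondition

variable {α β : ℝ} {u : ℝ × ℝ → ℝ}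

lemma mul_pdx_add_mul_pdy_eq_zero_of_curve {γ₁ γ₂ : ℝ → ℝ} {a b c d t : ℝ} (hcd : c < d)
    (ht : t ∈ Icc c d) (hu : DifferentiableAt ℝ u (γ₁ t, γ₂ t)) (h₁ : HasDerivAt γ₁ a t)
    (h₂ : HasDerivAt γ₂ b t) (hu0 : ∀ s ∈ Icc c d, u (γ₁ s, γ₂ s) = 0) :
    a * pdx u (γ₁ t, γ₂ t) + b * pdy u (γ₁ t, γ₂ t) = 0 :=
  (uniqueDiffOn_Icc hcd t ht).eq_deriv _
    (hasDerivAt_comp_curve hu h₁ h₂).hasDerivWithinAt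
    ((hasDerivWithinAt_const t _ (0 : ℝ)).congr hu0 (hu0 t ht))

lemma IsOutwardNormal.fst_mul_pdy_eq (hα : 0 < α) (hβ : 0 < β) {p n : ℝ × ℝ}
    (h : IsOutwardNormal α β p n) (hu : DifferentiableAt ℝ u p)
    (hu0 : ∀ q ∈ StadiumBoundary α β, u q = 0) : n.1 * pdy u p = n.2 * pdx u p := by
  have hflat : -α < α := by linarith
  have hpi : -(π / 2) < π / 2 := by linarith [pi_pos]
  have hvanish : ∀ {q m : ℝ × ℝ}, IsOutwardNormal α β q m → u q = 0 := fun hq =>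
    hu0 _ (hq.mem_stadiumBoundary hα hβ)
  cases h with
  | @top x hx =>
    linarith [mul_pdx_add_mul_pdy_eq_zero_of_curve hflat hx hu (hasDerivAt_id' x)
      (hasDerivAt_const x β) fun s hs => hvanish (.top hs)]
  | @bottom x hx =>
    linarith [mul_pdx_add_mul_pdy_eq_zero_of_curve hflat hx hu (hasDerivAt_id' x)
      (hasDerivAt_const x (-β)) fun s hs => hvanish (.bottom hs)]
  | @right θ hθ =>
    refine mul_left_cancel₀ hβ.ne' ?_
    linarith [mul_pdx_add_mul_pdy_eq_zero_of_curve hpi hθ hu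
      (((hasDerivAt_cos θ).const_mul β).const_add α) ((hasDerivAt_sin θ).const_mul β)
      fun s hs => hvanish (.right hs)]
  | @left θ hθ =>
    refine mul_left_cancel₀ hβ.ne' ?_
    linarith [mul_pdx_add_mul_pdy_eq_zero_of_curve (γ₁ := fun s => -(α + β * cos s)) hpi hθ hu
      (((hasDerivAt_cos θ).const_mul β).const_add α).neg ((hasDerivAt_sin θ).const_mul β)
      fun s hs => hvanish (.left hs)]

end DirichletCondition

section IntegralIdentities

variable {α β : ℝ} {u : ℝ × ℝ → ℝ} {p : ℝ × ℝ}

lemma setIntegral_stadium_div_eq_zero (hα : 0 < α) (hβ : 0 < β) {F G : ℝ × ℝ → ℝ}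
    (hF : ∀ p ∈ Stadium α β, ContDiffAt ℝ 1 F p) (hG : ∀ p ∈ Stadium α β, ContDiffAt ℝ 1 G p)
    (hF0 : ∀ p ∈ StadiumBoundary α β, F p = 0) (hG0 : ∀ p ∈ StadiumBoundary α β, G p = 0) :
    ∫ p in Stadium α β, (pdx F p + pdy G p) = 0 := by
  rw [setIntegral_stadium_div hα hβ hF hG]
  refine bdryInt_eq_zero hα fun p n h => ?_
  have hp := h.mem_stadiumBoundary hα hβ
  rw [hF0 p hp, hG0 p hp, mul_zero, mul_zero, add_zero]

-- Subtracting `ψ' u² / 2` from the first component cancels the cross term `ψ' u u_x`, which the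
-- `ψ`-weighted energy could not absorb without a bound on `ψ'² / ψ`.
lemma pdx_add_pdy_green_field (hu : ContDiffAt ℝ 2 u p) {ψ : ℝ → ℝ} (hψ : ContDiff ℝ 2 ψ) :
    pdx (fun q => ψ q.1 * u q * pdx u q - deriv ψ q.1 / 2 * u q ^ 2) p +
        pdy (fun q => ψ q.1 * u q * pdy u q) p =
      ψ p.1 * (pdx u p ^ 2 + pdy u p ^ 2) -
        (ψ p.1 * u p * lap u p + deriv (deriv ψ) p.1 / 2 * u p ^ 2) := by
  have hud : DifferentiableAt ℝ u p := hu.differentiableAt two_ne_zero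
  have huxx := hasDerivAt_pdx ((contDiffAt_pdx hu (m := 1) le_rfl).differentiableAt one_ne_zero)
  have huyy := hasDerivAt_pdy ((contDiffAt_pdy hu (m := 1) le_rfl).differentiableAt one_ne_zero)
  have hψd := (hψ.differentiable two_ne_zero p.1).hasDerivAt
  have hψd' := (hψ.deriv'.differentiable one_ne_zero p.1).hasDerivAt
  have hx := (((hψd.mul (hasDerivAt_pdx hud)).mul huxx).sub
    ((hψd'.div_const 2).mul ((hasDerivAt_pdx hud).pow 2))).deriv
  have hy := (((hasDerivAt_pdy hud).const_mul (ψ p.1)).mul huyy).deriv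
  refine (congrArg₂ (· + ·) hx hy).trans ?_
  simp only [Pi.mul_apply, Pi.pow_apply, lap]
  ring

lemma setIntegral_weighted_green (hα : 0 < α) (hβ : 0 < β)
    (hu : ∀ p ∈ Stadium α β, ContDiffAt ℝ 2 u p) (hu0 : ∀ p ∈ StadiumBoundary α β, u p = 0)
    {ψ : ℝ → ℝ} (hψ : ContDiff ℝ 2 ψ) :
    ∫ p in Stadium α β, ψ p.1 * (pdx u p ^ 2 + pdy u p ^ 2) =
      ∫ p in Stadium α β, (ψ p.1 * u p * lap u p + deriv (deriv ψ) p.1 / 2 * u p ^ 2) := by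
  have hψc : Continuous ψ := hψ.continuous
  have hψ1 : ContDiff ℝ 1 ψ := hψ.of_le one_le_two
  have huc : ContinuousOn u (Stadium α β) := fun p hp => (hu p hp).continuousAt.continuousWithinAt
  have huxc := continuousOn_pdx hu one_le_two
  have huyc := continuousOn_pdy hu one_le_two
  have hlapc := continuousOn_lap hu
  have hu1 : ∀ p ∈ Stadium α β, ContDiffAt ℝ 1 u p := fun p hp => (hu p hp).of_le one_le_two
  have hdiv := setIntegral_stadium_div_eq_zero hα hβ
    (F := fun p => ψ p.1 * u p * pdx u p - deriv ψ p.1 / 2 * u p ^ 2)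
    (G := fun p => ψ p.1 * u p * pdy u p)
    (fun p hp => by have := contDiffAt_pdx (hu p hp) (m := 1) le_rfl; have := hu1 p hp; fun_prop)
    (fun p hp => by have := contDiffAt_pdy (hu p hp) (m := 1) le_rfl; have := hu1 p hp; fun_prop)
    (fun p hp => by simp [hu0 p hp]) (fun p hp => by simp [hu0 p hp])
  rw [setIntegral_congr_fun (isCompact_stadium hα hβ).measurableSet fun p hp =>
      pdx_add_pdy_green_field (hu p hp) hψ,
    integral_sub (integrableOn_stadium hα hβ (by fun_prop))
      (integrableOn_stadium hα hβ (by fun_prop))] at hdiv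
  exact sub_eq_zero.1 hdiv

-- The field is `2 φ u_x ∇u - φ (|∇u|² - μ u²) e₁`, the one obtained from the multiplier `φ(x) ∂_x`.
lemma pdx_add_pdy_rellich_field (hu : ContDiffAt ℝ 2 u p) {φ : ℝ → ℝ} (hφ : ContDiff ℝ 1 φ)
    (μ : ℝ) :
    pdx (fun q => φ q.1 * (pdx u q ^ 2 - pdy u q ^ 2 + μ * u q ^ 2)) p +
        pdy (fun q => 2 * φ q.1 * pdx u q * pdy u q) p =
      deriv φ p.1 * (pdx u p ^ 2 - pdy u p ^ 2 + μ * u p ^ 2) -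
        2 * φ p.1 * pdx u p * (lap u p - μ * u p) := by
  have hu' := hasDerivAt_pdx (hu.differentiableAt two_ne_zero)
  have huxd := (contDiffAt_pdx hu (m := 1) le_rfl).differentiableAt one_ne_zero
  have huyd := (contDiffAt_pdy hu (m := 1) le_rfl).differentiableAt one_ne_zero
  have hφd := (hφ.differentiable one_ne_zero p.1).hasDerivAt
  have hx := (hφd.mul ((((hasDerivAt_pdx huxd).pow 2).sub ((hasDerivAt_pdx huyd).pow 2)).add
    ((hu'.pow 2).const_mul μ))).deriv
  have hy := (((hasDerivAt_pdy huxd).const_mul (2 * φ p.1)).mul (hasDerivAt_pdy huyd)).deriv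
  refine (congrArg₂ (· + ·) hx hy).trans ?_
  simp only [Pi.add_apply, Pi.sub_apply, Pi.pow_apply, lap, pdx_pdy_comm hu]
  ring

lemma bdryIntW_rellich (hα : 0 < α) (hβ : 0 < β)
    (hu : ∀ p ∈ Stadium α β, ContDiffAt ℝ 2 u p) (hu0 : ∀ p ∈ StadiumBoundary α β, u p = 0)
    {φ : ℝ → ℝ} (hφ : ContDiff ℝ 1 φ) (μ : ℝ) :
    bdryIntW α β (fun p n => φ p.1 * pdx u p * nderiv u p n) =
      ∫ p in Stadium α β, (deriv φ p.1 * (pdx u p ^ 2 - pdy u p ^ 2 + μ * u p ^ 2) -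
        2 * φ p.1 * pdx u p * (lap u p - μ * u p)) := by
  have htangent : ∀ p n, IsOutwardNormal α β p n → n.1 * pdy u p = n.2 * pdx u p := fun p n h =>
    h.fst_mul_pdy_eq hα hβ ((hu p (h.mem_stadium hα hβ)).differentiableAt two_ne_zero) hu0
  have hdiv := setIntegral_stadium_div hα hβ
    (F := fun p => φ p.1 * (pdx u p ^ 2 - pdy u p ^ 2 + μ * u p ^ 2))
    (G := fun p => 2 * φ p.1 * pdx u p * pdy u p)
    (fun p hp => by
      have := contDiffAt_pdx (hu p hp) (m := 1) le_rfl
      have := contDiffAt_pdy (hu p hp) (m := 1) le_rfl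
      have := (hu p hp).of_le one_le_two
      fun_prop)
    (fun p hp => by
      have := contDiffAt_pdx (hu p hp) (m := 1) le_rfl
      have := contDiffAt_pdy (hu p hp) (m := 1) le_rfl
      fun_prop)
  rw [setIntegral_congr_fun (isCompact_stadium hα hβ).measurableSet fun p hp =>
    pdx_add_pdy_rellich_field (hu p hp) hφ μ] at hdiv
  have hflux : ∀ p n, IsOutwardNormal α β p n →
      n.1 * (φ p.1 * (pdx u p ^ 2 - pdy u p ^ 2 + μ * u p ^ 2)) +
        n.2 * (2 * φ p.1 * pdx u p * pdy u p) = φ p.1 * pdx u p * nderiv u p n := fun p n h => by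
    rw [hu0 p (h.mem_stadiumBoundary hα hβ), nderiv]
    linear_combination (-φ p.1 * pdy u p) * htangent p n h
  rw [hdiv, bdryInt_congr hα hflux, bdryInt_eq_bdryIntW hα]
  · intro x hx
    have hux0 : pdx u (x, β) = 0 := by simpa using (htangent _ _ (.top hx)).symm
    rw [hux0, mul_zero, zero_mul]
  · intro x hx
    have hux0 : pdx u (x, -β) = 0 := by simpa using (htangent _ _ (.bottom hx)).symm
    rw [hux0, mul_zero, zero_mul]

lemma setIntegral_sq_add_fst_mul_pdx_eq_zero (hα : 0 < α) (hβ : 0 < β)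
    (hu : ∀ p ∈ Stadium α β, ContDiffAt ℝ 1 u p) (hu0 : ∀ p ∈ StadiumBoundary α β, u p = 0) :
    ∫ p in Stadium α β, (u p ^ 2 + 2 * p.1 * u p * pdx u p) = 0 := by
  rw [← setIntegral_stadium_div_eq_zero hα hβ
    (F := fun p => p.1 * u p ^ 2) (G := fun _ => 0)
    (fun p hp => by have := hu p hp; fun_prop) (fun p _ => contDiffAt_const)
    (fun p hp => by simp [hu0 p hp]) fun _ _ => rfl]
  refine setIntegral_congr_fun (isCompact_stadium hα hβ).measurableSet fun p hp => ?_
  have hx := ((hasDerivAt_id' p.1).mul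
    ((hasDerivAt_pdx ((hu p hp).differentiableAt one_ne_zero)).pow 2)).deriv
  refine .trans ?_ (congrArg₂ (· + ·) hx (deriv_const p.2 (0 : ℝ))).symm
  simp only [Pi.pow_apply]
  ring

lemma setIntegral_sq_le_setIntegral_pdx_sq (hα : 0 < α) (hβ : 0 < β)
    (hu : ∀ p ∈ Stadium α β, ContDiffAt ℝ 1 u p) (hu0 : ∀ p ∈ StadiumBoundary α β, u p = 0) :
    ∫ p in Stadium α β, u p ^ 2 ≤
      4 * (α + β) ^ 2 * ∫ p in Stadium α β, pdx u p ^ 2 := by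
  have huc : ContinuousOn u (Stadium α β) := fun p hp => (hu p hp).continuousAt.continuousWithinAt
  have huxc := continuousOn_pdx hu le_rfl
  have hpoint : ∀ p ∈ Stadium α β, u p ^ 2 ≤
      2 * (u p ^ 2 + 2 * p.1 * u p * pdx u p) + 4 * (α + β) ^ 2 * pdx u p ^ 2 := fun p hp => by
    have hfst := ((mem_stadium_iff_halfHeight hα hβ p.1 p.2).1 hp).1
    nlinarith [sq_nonneg (u p + 2 * p.1 * pdx u p),
      mul_le_mul_of_nonneg_right (sq_le_sq' hfst.1 hfst.2) (sq_nonneg (pdx u p))]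
  calc ∫ p in Stadium α β, u p ^ 2
      ≤ ∫ p in Stadium α β, (2 * (u p ^ 2 + 2 * p.1 * u p * pdx u p) +
          4 * (α + β) ^ 2 * pdx u p ^ 2) :=
        setIntegral_mono_on (integrableOn_stadium hα hβ (by fun_prop))
          (integrableOn_stadium hα hβ (by fun_prop)) (isCompact_stadium hα hβ).measurableSet hpoint
    _ = 4 * (α + β) ^ 2 * ∫ p in Stadium α β, pdx u p ^ 2 := by
        rw [integral_add (integrableOn_stadium hα hβ (by fun_prop))
          (integrableOn_stadium hα hβ (by fun_prop)), integral_const_mul, integral_const_mul,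
          setIntegral_sq_add_fst_mul_pdx_eq_zero hα hβ hu hu0, mul_zero, zero_add]

end IntegralIdentities

section Majorants

lemma deriv_eq_zero_of_eqOn_Iic {f : ℝ → ℝ} {a : ℝ} (hf : ∀ x ≤ a, f x = 0) :
    ∀ x ≤ a, deriv f x = 0 := fun x hx => by
  by_cases hd : DifferentiableAt ℝ f x
  · exact (uniqueDiffOn_Iic a x hx).eq_deriv _ hd.hasDerivAt.hasDerivWithinAt
      ((hasDerivWithinAt_const x _ (0 : ℝ)).congr hf (hf x hx))
  · exact deriv_zero_of_not_differentiableAt hd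

lemma exists_contDiff_abs_le_of_support_subset_Ici {g : ℝ → ℝ} {K : Set ℝ} (hK : IsCompact K)
    (hg : ContinuousOn g K) {a b : ℝ} (hab : a < b) (hsupp : Function.support g ⊆ Ici b)
    (n : ℕ∞) :
    ∃ ψ : ℝ → ℝ, ContDiff ℝ n ψ ∧ (∀ x ≤ a, ψ x = 0) ∧ ∀ x ∈ K, |g x| ≤ ψ x := by
  obtain ⟨M, hM⟩ := hK.exists_bound_of_continuousOn hg
  have hba : 0 < b - a := sub_pos.2 hab
  refine ⟨fun x => |M| * smoothTransition ((x - a) / (b - a)),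
    contDiff_const.mul (smoothTransition.contDiff.comp (by fun_prop)), fun x hx => ?_,
    fun x hx => ?_⟩
  · simp only [smoothTransition.zero_of_nonpos
      (div_nonpos_of_nonpos_of_nonneg (sub_nonpos.2 hx) hba.le), mul_zero]
  · by_cases hgx : g x = 0
    · rw [hgx, abs_zero]
      exact mul_nonneg (abs_nonneg M) (smoothTransition.nonneg _)
    · have hratio : 1 ≤ (x - a) / (b - a) := (one_le_div hba).2 (sub_le_sub_right (hsupp hgx) a)
      simp only [smoothTransition.one_of_one_le hratio, mul_one]
      exact (hM x hx).trans (le_abs_self M)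

lemma exists_nonneg_abs_le_abs_le_abs_le {f g h : ℝ → ℝ} {K : Set ℝ} (hK : IsCompact K)
    (hf : ContinuousOn f K) (hg : ContinuousOn g K) (hh : ContinuousOn h K) :
    ∃ M ≥ 0, (∀ x ∈ K, |f x| ≤ M) ∧ (∀ x ∈ K, |g x| ≤ M) ∧ ∀ x ∈ K, |h x| ≤ M := by
  obtain ⟨M, hM⟩ := hK.exists_bound_of_continuousOn (hf.prodMk (hg.prodMk hh))
  have hbound : ∀ x ∈ K, |f x| ≤ |M| ∧ |g x| ≤ |M| ∧ |h x| ≤ |M| := fun x hx => by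
    simpa only [norm_prod_le_iff, norm_eq_abs] using (hM x hx).trans (le_abs_self M)
  exact ⟨|M|, abs_nonneg M, fun x hx => (hbound x hx).1, fun x hx => (hbound x hx).2.1,
    fun x hx => (hbound x hx).2.2⟩

end Majorants

section WeightedYoung

variable {a M : ℝ}

lemma mul_mul_le_half_mul_sq_add_sq (ha : |a| ≤ M) (x y : ℝ) :
    a * x * y ≤ M / 2 * (x ^ 2 + y ^ 2) := by
  obtain ⟨hneg, hpos⟩ := abs_le.1 ha
  nlinarith [mul_nonneg (sub_nonneg.2 hpos) (sq_nonneg (x + y)),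
    mul_nonneg (neg_le_iff_add_nonneg.1 hneg) (sq_nonneg (x - y))]

lemma abs_two_mul_mul_mul_le {ε : ℝ} (hε : 0 < ε) (ha : |a| ≤ M) (x y : ℝ) :
    |2 * a * x * y| ≤ ε * x ^ 2 + M ^ 2 / ε * y ^ 2 := by
  have hyoung : 2 * |x| * (M * |y|) ≤ ε * |x| ^ 2 + ε⁻¹ * (M * |y|) ^ 2 :=
    two_mul_le_add_mul_sq hε
  calc |2 * a * x * y| = 2 * |x| * (|a| * |y|) := by
        rw [abs_mul, abs_mul, abs_mul, abs_two]
        ring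
    _ ≤ 2 * |x| * (M * |y|) := by gcongr
    _ ≤ ε * |x| ^ 2 + ε⁻¹ * (M * |y|) ^ 2 := hyoung
    _ = ε * x ^ 2 + M ^ 2 / ε * y ^ 2 := by
        rw [mul_pow, sq_abs, sq_abs]
        ring

end WeightedYoung

namespace QMDatum

variable {α β : ℝ} (d : QMDatum α β)

lemma contDiffAt {p : ℝ × ℝ} (hp : p ∈ Stadium α β) : ContDiffAt ℝ 2 d.u p := by
  obtain ⟨V, hV, hSV, hu⟩ := d.smooth
  exact contDiffAt_infty.1 (hu.contDiffAt (hV.mem_nhds (hSV hp))) 2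

lemma continuousOn_u : ContinuousOn d.u (Stadium α β) := fun _ hp =>
  (d.contDiffAt hp).continuousAt.continuousWithinAt

lemma continuousOn_pdx : ContinuousOn (pdx d.u) (Stadium α β) :=
  _root_.continuousOn_pdx (fun _ => d.contDiffAt) one_le_two

lemma continuousOn_pdy : ContinuousOn (pdy d.u) (Stadium α β) :=
  _root_.continuousOn_pdy (fun _ => d.contDiffAt) one_le_two

lemma continuousOn_f : ContinuousOn d.f (Stadium α β) :=
  ((continuousOn_lap fun _ => d.contDiffAt).sub (d.continuousOn_u.const_mul _)).congr
    fun p hp => (d.eqn p hp).symm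

lemma setIntegral_weighted_energy_eq (hα : 0 < α) (hβ : 0 < β) {ψ : ℝ → ℝ}
    (hψ : ContDiff ℝ 2 ψ) :
    ∫ p in Stadium α β, ψ p.1 * (pdx d.u p ^ 2 + pdy d.u p ^ 2 + d.lam ^ 2 * d.u p ^ 2) =
      ∫ p in Stadium α β, (ψ p.1 * d.u p * (d.f p + 2 * d.lam ^ 2 * d.u p) +
        deriv (deriv ψ) p.1 / 2 * d.u p ^ 2) := by
  have hu := d.continuousOn_u
  have hux := d.continuousOn_pdx
  have huy := d.continuousOn_pdy
  have hf := d.continuousOn_f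
  have hψc := hψ.continuous
  have hint : ∀ {g : ℝ × ℝ → ℝ}, ContinuousOn g (Stadium α β) → IntegrableOn g (Stadium α β) :=
    integrableOn_stadium hα hβ
  have hgreen : ∫ p in Stadium α β, ψ p.1 * (pdx d.u p ^ 2 + pdy d.u p ^ 2) =
      ∫ p in Stadium α β, (ψ p.1 * d.u p * (d.f p + d.lam ^ 2 * d.u p) +
        deriv (deriv ψ) p.1 / 2 * d.u p ^ 2) := by
    rw [setIntegral_weighted_green hα hβ (fun _ => d.contDiffAt) d.dirichlet hψ]
    refine setIntegral_congr_fun (isCompact_stadium hα hβ).measurableSet fun p hp => ?_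
    simp only [← d.eqn p hp, sub_add_cancel]
  simp only [mul_add (ψ _) (_ + _)]
  rw [integral_add (hint (by fun_prop)) (hint (by fun_prop)), hgreen,
    ← integral_add (hint (by fun_prop)) (hint (by fun_prop))]
  congr 1 with p
  ring

lemma setIntegral_sq_le_of_lam_small (hα : 0 < α) (hβ : 0 < β)
    (hlam : 16 * (α + β) ^ 2 * d.lam ^ 2 ≤ 1) :
    ∫ p in Stadium α β, d.u p ^ 2 ≤ 64 * (α + β) ^ 4 * ∫ p in Stadium α β, d.f p ^ 2 := by
  have hu := d.continuousOn_u
  have hux := d.continuousOn_pdx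
  have huy := d.continuousOn_pdy
  have hf := d.continuousOn_f
  have hint : ∀ {g : ℝ × ℝ → ℝ}, ContinuousOn g (Stadium α β) → IntegrableOn g (Stadium α β) :=
    integrableOn_stadium hα hβ
  have hmeas := (isCompact_stadium hα hβ).measurableSet
  have henergy : ∫ p in Stadium α β, (pdx d.u p ^ 2 + pdy d.u p ^ 2 + d.lam ^ 2 * d.u p ^ 2) =
      ∫ p in Stadium α β, d.u p * (d.f p + 2 * d.lam ^ 2 * d.u p) := by
    simpa using d.setIntegral_weighted_energy_eq hα hβ (ψ := fun _ => 1) contDiff_const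
  have hpoint : ∀ p, 4 * (α + β) ^ 2 * (d.u p * (d.f p + 2 * d.lam ^ 2 * d.u p)) ≤
      3 / 4 * d.u p ^ 2 + 16 * (α + β) ^ 4 * d.f p ^ 2 := fun p => by
    nlinarith [sq_nonneg (d.u p / 2 - 4 * (α + β) ^ 2 * d.f p),
      mul_le_mul_of_nonneg_right hlam (sq_nonneg (d.u p))]
  have habsorb : ∫ p in Stadium α β, d.u p ^ 2 ≤
      3 / 4 * (∫ p in Stadium α β, d.u p ^ 2) +
        16 * (α + β) ^ 4 * ∫ p in Stadium α β, d.f p ^ 2 :=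
    calc ∫ p in Stadium α β, d.u p ^ 2
        ≤ 4 * (α + β) ^ 2 * ∫ p in Stadium α β, pdx d.u p ^ 2 :=
          setIntegral_sq_le_setIntegral_pdx_sq hα hβ
            (fun p hp => (d.contDiffAt hp).of_le one_le_two) d.dirichlet
      _ ≤ 4 * (α + β) ^ 2 * ∫ p in Stadium α β,
            (pdx d.u p ^ 2 + pdy d.u p ^ 2 + d.lam ^ 2 * d.u p ^ 2) := by
          refine mul_le_mul_of_nonneg_left (setIntegral_mono_on (hint (by fun_prop))
            (hint (by fun_prop)) hmeas fun p _ => ?_) (by positivity)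
          rw [add_assoc]
          exact le_add_of_nonneg_right (by positivity)
      _ ≤ ∫ p in Stadium α β, (3 / 4 * d.u p ^ 2 + 16 * (α + β) ^ 4 * d.f p ^ 2) := by
          rw [henergy, ← integral_const_mul]
          exact setIntegral_mono_on (hint (by fun_prop)) (hint (by fun_prop)) hmeas
            fun p _ => hpoint p
      _ = _ := by
          rw [integral_add (hint (by fun_prop)) (hint (by fun_prop)), integral_const_mul,
            integral_const_mul]
  linarith

-- For small `λ` Poincaré's inequality bounds the left side by the `f` term; otherwise the first
-- coefficient on the right is at least `1`.
lemma setIntegral_wings_sq_le (hα : 0 < α) (hβ : 0 < β) :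
    ∫ p in Wings α β, d.u p ^ 2 ≤
      16 * (α + β) ^ 2 * d.lam ^ 2 * (∫ p in Wings α β, d.u p ^ 2) +
        64 * (α + β) ^ 4 * ∫ p in Stadium α β, d.f p ^ 2 := by
  rcases le_total (16 * (α + β) ^ 2 * d.lam ^ 2) 1 with hlam | hlam
  · refine ((setIntegral_sq_wings_le_stadium hα hβ d.continuousOn_u).trans
      (d.setIntegral_sq_le_of_lam_small hα hβ hlam)).trans (le_add_of_nonneg_left ?_)
    positivity
  · refine (le_mul_of_one_le_left (by positivity) hlam).trans (le_add_of_nonneg_right ?_)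
    positivity

lemma setIntegral_weighted_energy_le (hα : 0 < α) (hβ : 0 < β) {ψ : ℝ → ℝ} (hψ : ContDiff ℝ 2 ψ)
    (hψ0 : ∀ x ≤ α, ψ x = 0) {M : ℝ}
    (hψM : ∀ x ∈ Icc (-(α + β)) (α + β), |ψ x| ≤ M)
    (hψM'' : ∀ x ∈ Icc (-(α + β)) (α + β), |deriv (deriv ψ) x| ≤ M) :
    ∫ p in Stadium α β, ψ p.1 * (pdx d.u p ^ 2 + pdy d.u p ^ 2 + d.lam ^ 2 * d.u p ^ 2) ≤
      (M + 2 * M * d.lam ^ 2) * (∫ p in Wings α β, d.u p ^ 2) +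
        M / 2 * ∫ p in Stadium α β, d.f p ^ 2 := by
  have hu := d.continuousOn_u
  have hf := d.continuousOn_f
  have hψc := hψ.continuous
  have hM : 0 ≤ M := (abs_nonneg _).trans (hψM α ⟨by linarith, by linarith⟩)
  have hint : ∀ {g : ℝ × ℝ → ℝ}, ContinuousOn g (Stadium α β) → IntegrableOn g (Wings α β) :=
    fun hg => (integrableOn_stadium hα hβ hg).mono_set subset_union_right
  have hψ''0 : ∀ x ≤ α, deriv (deriv ψ) x = 0 :=
    deriv_eq_zero_of_eqOn_Iic (deriv_eq_zero_of_eqOn_Iic hψ0)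
  have hpoint : ∀ p ∈ Wings α β, ψ p.1 * d.u p * (d.f p + 2 * d.lam ^ 2 * d.u p) +
      deriv (deriv ψ) p.1 / 2 * d.u p ^ 2 ≤
      (M + 2 * M * d.lam ^ 2) * d.u p ^ 2 + M / 2 * d.f p ^ 2 := fun p hp => by
    have hfst := ((mem_stadium_iff_halfHeight hα hβ p.1 p.2).1 (Or.inr hp)).1
    have hcross := mul_mul_le_half_mul_sq_add_sq (hψM p.1 hfst) (d.u p) (d.f p)
    have hψu := mul_le_mul_of_nonneg_right ((le_abs_self _).trans (hψM p.1 hfst))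
      (mul_nonneg (sq_nonneg d.lam) (sq_nonneg (d.u p)))
    have hψ''u := mul_le_mul_of_nonneg_right ((le_abs_self _).trans (hψM'' p.1 hfst))
      (sq_nonneg (d.u p))
    linarith
  calc ∫ p in Stadium α β, ψ p.1 * (pdx d.u p ^ 2 + pdy d.u p ^ 2 + d.lam ^ 2 * d.u p ^ 2)
      = ∫ p in Wings α β, (ψ p.1 * d.u p * (d.f p + 2 * d.lam ^ 2 * d.u p) +
          deriv (deriv ψ) p.1 / 2 * d.u p ^ 2) := by
        rw [d.setIntegral_weighted_energy_eq hα hβ hψ]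
        refine setIntegral_eq_of_subset_of_forall_sdiff_eq_zero
          (isCompact_stadium hα hβ).measurableSet subset_union_right fun p hp => ?_
        have hp := fst_le_of_mem_stadium_diff_wings hp
        rw [hψ0 _ hp, hψ''0 _ hp]
        ring
    _ ≤ ∫ p in Wings α β, ((M + 2 * M * d.lam ^ 2) * d.u p ^ 2 + M / 2 * d.f p ^ 2) :=
        setIntegral_mono_on (hint (by fun_prop)) (hint (by fun_prop)) measurableSet_wings hpoint
    _ = (M + 2 * M * d.lam ^ 2) * (∫ p in Wings α β, d.u p ^ 2) +
          M / 2 * ∫ p in Wings α β, d.f p ^ 2 := by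
        rw [integral_add (hint (by fun_prop)) (hint (by fun_prop)), integral_const_mul,
          integral_const_mul]
    _ ≤ _ := add_le_add le_rfl
        (mul_le_mul_of_nonneg_left (setIntegral_sq_wings_le_stadium hα hβ hf) (by positivity))

lemma abs_bdryIntW_le (hα : 0 < α) (hβ : 0 < β) {φ ψ : ℝ → ℝ} (hφ : ContDiff ℝ 1 φ)
    (hψ : Continuous ψ) (hφψ : ∀ x ∈ Icc (-(α + β)) (α + β), |deriv φ x| ≤ ψ x) {B : ℝ}
    (hφB : ∀ x ∈ Icc (-(α + β)) (α + β), |φ x| ≤ B) {ε : ℝ} (hε : 0 < ε) :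
    |bdryIntW α β (fun p n => φ p.1 * pdx d.u p * nderiv d.u p n)| ≤
      (∫ p in Stadium α β,
        ψ p.1 * (pdx d.u p ^ 2 + pdy d.u p ^ 2 + d.lam ^ 2 * d.u p ^ 2)) +
      ε * (∫ p in Stadium α β, pdx d.u p ^ 2) +
      B ^ 2 / ε * ∫ p in Stadium α β, d.f p ^ 2 := by
  have hu := d.continuousOn_u
  have hux := d.continuousOn_pdx
  have huy := d.continuousOn_pdy
  have hf := d.continuousOn_f
  have hint : ∀ {g : ℝ × ℝ → ℝ}, ContinuousOn g (Stadium α β) → IntegrableOn g (Stadium α β) :=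
    integrableOn_stadium hα hβ
  have hmeas := (isCompact_stadium hα hβ).measurableSet
  have hpoint : ∀ p ∈ Stadium α β,
      ‖deriv φ p.1 * (pdx d.u p ^ 2 - pdy d.u p ^ 2 + d.lam ^ 2 * d.u p ^ 2) -
        2 * φ p.1 * pdx d.u p * (lap d.u p - d.lam ^ 2 * d.u p)‖ ≤
      ψ p.1 * (pdx d.u p ^ 2 + pdy d.u p ^ 2 + d.lam ^ 2 * d.u p ^ 2) +
        ε * pdx d.u p ^ 2 + B ^ 2 / ε * d.f p ^ 2 := fun p hp => by
    have hfst := ((mem_stadium_iff_halfHeight hα hβ p.1 p.2).1 hp).1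
    have hψp : 0 ≤ ψ p.1 := (abs_nonneg _).trans (hφψ p.1 hfst)
    have hquadratic : |pdx d.u p ^ 2 - pdy d.u p ^ 2 + d.lam ^ 2 * d.u p ^ 2| ≤
        pdx d.u p ^ 2 + pdy d.u p ^ 2 + d.lam ^ 2 * d.u p ^ 2 := by
      have hlu : 0 ≤ d.lam ^ 2 * d.u p ^ 2 := by positivity
      exact abs_le.2 ⟨by linarith [sq_nonneg (pdx d.u p)], by linarith [sq_nonneg (pdy d.u p)]⟩
    rw [d.eqn p hp, add_assoc]
    refine (norm_sub_le _ _).trans (add_le_add ?_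
      (abs_two_mul_mul_mul_le hε (hφB p.1 hfst) (pdx d.u p) (d.f p)))
    rw [norm_mul]
    exact mul_le_mul (hφψ p.1 hfst) hquadratic (abs_nonneg _) hψp
  rw [bdryIntW_rellich hα hβ (fun _ => d.contDiffAt) d.dirichlet hφ (d.lam ^ 2)]
  refine (norm_integral_le_of_norm_le (hint (by fun_prop))
    ((ae_restrict_iff' hmeas).2 (.of_forall hpoint))).trans_eq ?_
  rw [integral_add (hint (by fun_prop)) (hint (by fun_prop)),
    integral_add (hint (by fun_prop)) (hint (by fun_prop)), integral_const_mul,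
    integral_const_mul]

end QMDatum

theorem stmt12_general (α β : ℝ) (hα : 0 < α) (hβ : 0 < β) (φ : ℝ → ℝ) (hφ : ContDiff ℝ 1 φ)
    {δ : ℝ} (hδ : 0 < δ) (hφsupp : Function.support φ ⊆ {x : ℝ | α + δ ≤ x}) :
    ∀ ε > 0, ∃ C > 0, ∀ d : QMDatum α β,
      |bdryIntW α β (fun p n => φ p.1 * pdx d.u p * nderiv d.u p n)| ≤
        C * d.lam ^ 2 * (∫ p in Wings α β, (d.u p) ^ 2) +
        C * (∫ p in Stadium α β, (d.f p) ^ 2) +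
        ε * (∫ p in Stadium α β, (pdx d.u p) ^ 2) := by
  intro ε hε
  obtain ⟨ψ, hψ, hψ0, hφψ⟩ := exists_contDiff_abs_le_of_support_subset_Ici
    (isCompact_Icc (a := -(α + β)) (b := α + β)) (hφ.continuous_deriv le_rfl).continuousOn
    (lt_add_of_pos_right α hδ)
    (support_deriv_subset.trans (closure_minimal hφsupp isClosed_Ici)) 2
  obtain ⟨M, hM0, hφM, hψM, hψM''⟩ := exists_nonneg_abs_le_abs_le_abs_le
    (isCompact_Icc (a := -(α + β)) (b := α + β)) hφ.continuous.continuousOn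
    hψ.continuous.continuousOn (hψ.deriv'.continuous_deriv le_rfl).continuousOn
  refine ⟨2 * M + 16 * (α + β) ^ 2 * M + 64 * (α + β) ^ 4 * M + M / 2 + M ^ 2 / ε + 1,
    by positivity, fun d => ?_⟩
  have hrellich := d.abs_bdryIntW_le hα hβ hφ hψ.continuous hφψ hφM hε
  have henergy := d.setIntegral_weighted_energy_le hα hβ hψ hψ0 hψM hψM''
  have hwings := mul_le_mul_of_nonneg_left (d.setIntegral_wings_sq_le hα hβ) hM0
  have hUC : 0 ≤ (64 * (α + β) ^ 4 * M + M / 2 + M ^ 2 / ε + 1) *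
      (d.lam ^ 2 * ∫ p in Wings α β, d.u p ^ 2) := by positivity
  have hFC : 0 ≤ (2 * M + 16 * (α + β) ^ 2 * M + 1) * ∫ p in Stadium α β, d.f p ^ 2 := by
    positivity
  linarith

/-- Region III estimate: for `φ` smooth, `0 ≤ φ ≤ 1`, supported in
`{x ≥ α + β/4}`, equal to `1` on `{x ≥ α + β/2}`, with `φ' ≥ 0`, and for every `ε > 0`,
there is `C > 0` such that every real Dirichlet quasimode datum satisfies
`|∫_{∂S ∩ W} φ(x)(∂_x u)(∂_N u) dl| ≤ C λ² ‖u‖²_{L²(W)} + C ‖f‖²_{L²(S)} + ε ∫_S (∂_x u)²`. -/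
theorem stmt12 (α β : ℝ) (hα : 0 < α) (hβ : 0 < β)
    (φ : ℝ → ℝ) (hφ : ContDiff ℝ (⊤ : ℕ∞) φ)
    (hφ01 : ∀ x, 0 ≤ φ x ∧ φ x ≤ 1)
    (hφsupp : Function.support φ ⊆ {x : ℝ | α + β / 4 ≤ x})
    (hφ1 : ∀ x, α + β / 2 ≤ x → φ x = 1)
    (hφ' : ∀ x, 0 ≤ deriv φ x) :
    ∀ ε > 0, ∃ C > 0, ∀ d : QMDatum α β,
      |bdryIntW α β (fun p n => φ p.1 * pdx d.u p * nderiv d.u p n)| ≤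
        C * d.lam ^ 2 * (∫ p in Wings α β, (d.u p) ^ 2) +
        C * (∫ p in Stadium α β, (d.f p) ^ 2) +
        ε * (∫ p in Stadium α β, (pdx d.u p) ^ 2) :=
  stmt12_general α β hα hβ φ (contDiff_infty.1 hφ 1) (div_pos hβ four_pos) hφsupp
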